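/- Let f satisfy the regularity and decay assumption, let F be its Radon transform, and let α(χ,u) := PV ∫_ℝ ∂_u F(χ,u')/(u'−u) du'. Then there exist constants C, R > 0 such that for every unit vector χ ∈ S², every u ∈ ℝ with |u| ≥ R and every integer 0 ≤ j ≤ 6: |∂_u^j α(χ,u) − (−1)^j (j+1)!/u^{j+2}| ≤ C/|u|^{j+3}. -/

import Mathlib

/-!
Write `G = F(χ,·)`. Differentiating under the integral and using
`‖uχ + w‖ ≥ (|u| + ‖w‖)/2`, the function `G` has eight derivatives, all bounded by
`K e^{-|s|/2}`; the constant `K` is uniform in `χ`, since every plane `χ^⊥` is isometric to `ℝ²`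
(`derivChain_radon`). Fubini along `ℝ³ = ℝχ ⊕ χ^⊥` gives `∫ G = 1` (`integral_radon`).

For a function `h` such that `h` and `h'` decay exponentially, the principal value equals the
absolutely convergent integral `symmPV h u = ∫₀^∞ (h(u+t) − h(u−t))/t dt`
(`ExpDecay.pvReal_eq`). This form commutes with differentiation in `u`, so
`∂_u^j α = symmPV (G^{(j+1)})` (`DerivChain.iterate_deriv_symmPV`), and it is bounded uniformly in
`u` (`ExpDecay.abs_symmPV_le`).

The identity `symmPV (s h) u = u · symmPV h u + ∫ h`, iterated `n` times (`pow_mul_symmPV`), reads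
`u^n symmPV h u = symmPV (s^n h) u − ∑_{k<n} u^{n-1-k} ∫ s^k h`. Take `h = G^{(j+1)}` and
`n = j + 3`. Integration by parts shows that the moments of order `k ≤ j` vanish and that the one of
order `j + 1` is `(-1)^{j+1} (j+1)!`, which is the claimed main term. The moment of order `j + 2`
and `symmPV (s^{j+3} h) u` are bounded, and they form the error (`DerivChain.symmPV_asymp`). No
cut-off is needed, and `R = 1` works.
-/

open MeasureTheory Filter RealInnerProductSpace

noncomputable section

local notation "E3" => EuclideanSpace ℝ (Fin 3)

/-- The Radon transform `F(χ,u) = ∫_{χ^⊥} f(uχ + w) dw` of `f : ℝ³ → ℝ`, the integral being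
taken over the orthogonal complement of `χ` with respect to its canonical (Lebesgue)
measure. -/
def Radon (f : EuclideanSpace ℝ (Fin 3) → ℝ) (χ : E3) (u : ℝ) : ℝ :=
  ∫ w : ((ℝ ∙ χ)ᗮ : Submodule ℝ (EuclideanSpace ℝ (Fin 3))), f (u • χ + (w : E3))

/-- The principal value `PV ∫ g(u')/(u'−u) du' = lim_{δ→0⁺} ∫_{|u'−u|≥δ} g(u')/(u'−u) du'`. -/
def pvReal (g : ℝ → ℝ) (u : ℝ) : ℝ :=
  limUnder (nhdsWithin (0 : ℝ) (Set.Ioi 0)) fun δ =>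
    ∫ u' in {u' : ℝ | δ ≤ |u' - u|}, g u' / (u' - u)

/-- `α(χ,u) = PV ∫ ∂_u F(χ,u')/(u'−u) du'`, where `F` is the Radon transform of `f`. -/
def alphaFun (f : EuclideanSpace ℝ (Fin 3) → ℝ) (χ : E3) (u : ℝ) : ℝ :=
  pvReal (fun s => deriv (Radon f χ) s) u

/-! ### Principal values of exponentially decaying functions -/

lemma integrable_exp_neg_norm_div {E : Type*} [NormedAddCommGroup E] [NormedSpace ℝ E]
    [FiniteDimensional ℝ E] [MeasurableSpace E] [BorelSpace E] (μ : Measure E)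
    [μ.IsAddHaarMeasure] (hE : Module.finrank ℝ E ≤ 3) :
    Integrable (fun w : E => Real.exp (-‖w‖ / 4)) μ := by
  have h1 : Integrable (fun w : E => (1 + ‖w‖) ^ (-(4 : ℝ))) μ := by
    apply integrable_one_add_norm
    have : (Module.finrank ℝ E : ℝ) ≤ 3 := by exact_mod_cast hE
    linarith
  refine (h1.const_mul (4 ^ 4 * 24 * Real.exp (1 / 4))).mono' (by fun_prop) ?_
  refine Filter.Eventually.of_forall fun w => ?_
  have hx : 0 ≤ (1 + ‖w‖) / 4 := by positivity
  have h2 := Real.pow_div_factorial_le_exp _ hx 4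
  have h3 : Real.exp ((1 + ‖w‖) / 4) = Real.exp (1 / 4) * Real.exp (‖w‖ / 4) := by
    rw [← Real.exp_add]; ring_nf
  have h4 : Real.exp (-‖w‖ / 4) = (Real.exp (‖w‖ / 4))⁻¹ := by
    rw [← Real.exp_neg]; ring_nf
  have h5 : (0 : ℝ) < 1 + ‖w‖ := by positivity
  rw [Real.norm_of_nonneg (Real.exp_pos _).le, Real.rpow_neg h5.le, h4]
  rw [h3] at h2
  have h6 : (1 + ‖w‖) ^ (4 : ℝ) = (1 + ‖w‖) ^ 4 := by
    exact_mod_cast Real.rpow_natCast (1 + ‖w‖) 4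
  rw [h6, ← div_eq_mul_inv, le_div_iff₀ (by positivity), inv_mul_le_iff₀ (Real.exp_pos _)]
  norm_num [Nat.factorial] at h2
  have h7 : ((1 + ‖w‖) / 4) ^ 4 / 24 = (1 + ‖w‖) ^ 4 / (4 ^ 4 * 24) := by ring
  rw [h7, div_le_iff₀ (by norm_num)] at h2
  linarith

lemma integrable_exp_abs : Integrable (fun s : ℝ => Real.exp (-|s| / 4)) := by
  simpa using integrable_exp_neg_norm_div (volume : Measure ℝ) (by simp)

/-- `h` is differentiable with derivative `h'`, and both are dominated by `K e^{-|s|/4}`. -/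
structure ExpDecay (K : ℝ) (h h' : ℝ → ℝ) : Prop where
  deriv : ∀ s, HasDerivAt h (h' s) s
  bound : ∀ s, |h s| ≤ K * Real.exp (-|s| / 4)
  bound' : ∀ s, |h' s| ≤ K * Real.exp (-|s| / 4)

/-- The absolutely convergent form `∫₀^∞ (h(u+t) − h(u−t))/t dt` of the principal value
`PV ∫ h(s)/(s−u) ds`. -/
def symmPV (h : ℝ → ℝ) (u : ℝ) : ℝ := ∫ t in Set.Ioi (0 : ℝ), (h (u + t) - h (u - t)) / t

namespace ExpDecay

variable {K : ℝ} {h h' h'' : ℝ → ℝ}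

lemma nonneg (H : ExpDecay K h h') : 0 ≤ K := by
  have := (abs_nonneg _).trans (H.bound 0)
  simpa using this

lemma continuous (H : ExpDecay K h h') : Continuous h :=
  continuous_iff_continuousAt.2 fun s => (H.deriv s).continuousAt

lemma integrable (H : ExpDecay K h h') : Integrable h :=
  (integrable_exp_abs.const_mul K).mono' H.continuous.aestronglyMeasurable
    (Filter.Eventually.of_forall H.bound)

lemma quot_le_two (H : ExpDecay K h h') (u : ℝ) {t : ℝ} (ht : 0 < t) :
    |(h (u + t) - h (u - t)) / t| ≤ 2 * K := by
  have h1 : ‖h (u + t) - h (u - t)‖ ≤ K * ‖(u + t) - (u - t)‖ := by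
    refine Convex.norm_image_sub_le_of_norm_hasDerivWithin_le (s := Set.univ) (f' := h')
      (fun x _ => (H.deriv x).hasDerivWithinAt) (fun x _ => ?_) convex_univ trivial trivial
    refine (H.bound' x).trans ?_
    refine mul_le_of_le_one_right H.nonneg (Real.exp_le_one_iff.2 ?_)
    have := abs_nonneg x
    linarith
  rw [abs_div, abs_of_pos ht, div_le_iff₀ ht]
  have h2 : ‖(u + t) - (u - t)‖ = 2 * t := by
    rw [Real.norm_eq_abs, abs_of_pos] <;> linarith
  rw [h2, Real.norm_eq_abs] at h1
  linarith

lemma quot_le_add (H : ExpDecay K h h') (u : ℝ) {t : ℝ} (ht : 1 ≤ t) :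
    |(h (u + t) - h (u - t)) / t| ≤
      K * Real.exp (-|u + t| / 4) + K * Real.exp (-|u - t| / 4) := by
  rw [abs_div, abs_of_pos (by linarith : (0 : ℝ) < t)]
  refine (div_le_self (abs_nonneg _) ht).trans ?_
  exact (abs_sub _ _).trans (add_le_add (H.bound _) (H.bound _))

/-- A dominating function that is locally uniform in `u`. -/
lemma quot_le_exp (H : ExpDecay K h h') {u B : ℝ} (hu : |u| ≤ B) {t : ℝ} (ht : 0 < t) :
    |(h (u + t) - h (u - t)) / t| ≤ 2 * K * Real.exp ((B + 1) / 4) * Real.exp (-t / 4) := by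
  have hK := H.nonneg
  rw [mul_assoc, ← Real.exp_add]
  have hB := (abs_nonneg u).trans hu
  rcases le_total t 1 with h1 | h1
  · refine (H.quot_le_two u ht).trans (le_mul_of_one_le_right (by positivity) ?_)
    apply Real.one_le_exp
    linarith
  · refine (H.quot_le_add u h1).trans ?_
    have e1 : Real.exp (-|u + t| / 4) ≤ Real.exp ((B + 1) / 4 + -t / 4) := by
      apply Real.exp_le_exp.2
      have := le_abs_self (u + t)
      have := neg_abs_le u
      linarith
    have e2 : Real.exp (-|u - t| / 4) ≤ Real.exp ((B + 1) / 4 + -t / 4) := by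
      apply Real.exp_le_exp.2
      have := neg_abs_le (u - t)
      have := le_abs_self u
      linarith
    nlinarith [mul_le_mul_of_nonneg_left e1 hK, mul_le_mul_of_nonneg_left e2 hK]

lemma _root_.integrableOn_exp_quarter (c : ℝ) :
    Integrable (fun t : ℝ => c * Real.exp (-t / 4)) (volume.restrict (Set.Ioi (0 : ℝ))) := by
  apply Integrable.const_mul
  have := integrable_exp_abs.integrableOn (s := Set.Ioi (0 : ℝ))
  refine this.congr ?_
  filter_upwards [ae_restrict_mem measurableSet_Ioi] with t ht
  rw [abs_of_pos ht]

lemma measurable_quot (hc : Continuous h) (u : ℝ) :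
    Measurable (fun t : ℝ => (h (u + t) - h (u - t)) / t) := by
  have h1 : Continuous (fun t : ℝ => h (u + t) - h (u - t)) := by fun_prop
  exact h1.measurable.div measurable_id

lemma integrable_quot (H : ExpDecay K h h') (u : ℝ) :
    Integrable (fun t : ℝ => (h (u + t) - h (u - t)) / t)
      (volume.restrict (Set.Ioi (0 : ℝ))) := by
  refine (integrableOn_exp_quarter (2 * K * Real.exp ((|u| + 1) / 4))).mono'
    (measurable_quot H.continuous u).aestronglyMeasurable ?_
  filter_upwards [ae_restrict_mem measurableSet_Ioi] with t ht
  exact H.quot_le_exp le_rfl ht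

lemma hasDerivAt_symmPV (H : ExpDecay K h h') (H' : ExpDecay K h' h'') (u : ℝ) :
    HasDerivAt (symmPV h) (symmPV h' u) u := by
  refine (hasDerivAt_integral_of_dominated_loc_of_deriv_le
    (μ := volume.restrict (Set.Ioi (0 : ℝ)))
    (F := fun u t => (h (u + t) - h (u - t)) / t)
    (F' := fun u t => (h' (u + t) - h' (u - t)) / t)
    (bound := fun t => 2 * K * Real.exp ((|u| + 1 + 1) / 4) * Real.exp (-t / 4))
    (Metric.ball_mem_nhds u one_pos)
    (Filter.Eventually.of_forall fun x =>
      (measurable_quot H.continuous x).aestronglyMeasurable) (H.integrable_quot u)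
    (measurable_quot H'.continuous u).aestronglyMeasurable ?_
    (integrableOn_exp_quarter _) ?_).2
  · filter_upwards [ae_restrict_mem measurableSet_Ioi] with t ht x hx
    refine H'.quot_le_exp ?_ ht
    rw [Metric.mem_ball, Real.dist_eq] at hx
    have := abs_sub_abs_le_abs_sub x u
    linarith
  · refine Filter.Eventually.of_forall fun t x _ => ?_
    exact (((H.deriv (x + t)).comp_add_const x t).sub
      ((H.deriv (x - t)).comp_sub_const x t)).div_const t

/-- `|symmPV h|` is bounded uniformly in `u`: the difference quotient is at most `2K` on
`(0, 1]`, and the rest is controlled by the `L¹` norm of `e^{-|s|/4}`. -/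
lemma abs_symmPV_le (H : ExpDecay K h h') (u : ℝ) :
    |symmPV h u| ≤ K * (2 + 2 * ∫ s : ℝ, Real.exp (-|s| / 4)) := by
  have hK := H.nonneg
  set φ : ℝ → ℝ := fun s => Real.exp (-|s| / 4) with hφ
  have i1 : Integrable (fun t => φ (u + t)) := integrable_exp_abs.comp_add_left u
  have i2 : Integrable (fun t => φ (u - t)) := integrable_exp_abs.comp_sub_left u
  have i0 : Integrable ((Set.Ioc (0 : ℝ) 1).indicator fun _ => 2 * K) := by
    rw [integrable_indicator_iff measurableSet_Ioc]
    exact integrableOn_const (by simp)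
  have i4 : Integrable (fun t => K * φ (u + t) + K * φ (u - t)) :=
    (i1.const_mul K).add (i2.const_mul K)
  have i3 : Integrable (fun t => (Set.Ioc (0 : ℝ) 1).indicator (fun _ => 2 * K) t +
      (K * φ (u + t) + K * φ (u - t))) :=
    i0.add i4
  have hpos : ∀ s, 0 ≤ φ s := fun s => (Real.exp_pos _).le
  have hn : ∀ t, 0 ≤ (Set.Ioc (0 : ℝ) 1).indicator (fun _ => 2 * K) t +
      (K * φ (u + t) + K * φ (u - t)) := fun t => by
    have := Set.indicator_nonneg (s := Set.Ioc (0 : ℝ) 1) (f := fun _ => 2 * K)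
      (fun _ _ => by positivity) t
    have := mul_nonneg hK (hpos (u + t))
    have := mul_nonneg hK (hpos (u - t))
    linarith
  calc |symmPV h u| ≤ ∫ t in Set.Ioi (0 : ℝ), ((Set.Ioc (0 : ℝ) 1).indicator (fun _ => 2 * K) t +
      (K * φ (u + t) + K * φ (u - t))) := by
        rw [← Real.norm_eq_abs, symmPV]
        refine norm_integral_le_of_norm_le i3.integrableOn ?_
        filter_upwards [ae_restrict_mem measurableSet_Ioi] with t ht
        have h1 := mul_nonneg hK (hpos (u + t))
        have h2 := mul_nonneg hK (hpos (u - t))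
        rcases le_or_gt t 1 with h3 | h3
        · rw [Set.indicator_of_mem (show t ∈ Set.Ioc (0 : ℝ) 1 from ⟨ht, h3⟩)]
          have := H.quot_le_two u (t := t) ht
          rw [Real.norm_eq_abs]
          linarith
        · rw [Set.indicator_of_notMem (fun h4 => absurd h4.2 (not_le.2 h3)), zero_add]
          exact H.quot_le_add u h3.le
    _ ≤ ∫ t : ℝ, ((Set.Ioc (0 : ℝ) 1).indicator (fun _ => 2 * K) t +
      (K * φ (u + t) + K * φ (u - t))) :=
        setIntegral_le_integral i3 (Filter.Eventually.of_forall hn)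
    _ = K * (2 + 2 * ∫ s : ℝ, φ s) := by
        rw [integral_add i0 i4,
          integral_add (i1.const_mul K) (i2.const_mul K), integral_const_mul, integral_const_mul,
          integral_add_left_eq_self φ u, integral_sub_left_eq_self φ volume u,
          integral_indicator measurableSet_Ioc]
        simp
        ring

lemma _root_.integral_eq_Ioi_add {k : ℝ → ℝ} (hk : Integrable k) :
    ∫ t, k t = ∫ t in Set.Ioi (0 : ℝ), (k t + k (-t)) := by
  rw [integral_add hk.integrableOn hk.comp_neg.integrableOn, integral_comp_neg_Ioi, neg_zero,
    add_comm, intervalIntegral.integral_Iic_add_Ioi hk.integrableOn hk.integrableOn]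

/-- The identity `1/(s−u) = −1/u + s/(u(s−u))` under the principal value. -/
lemma symmPV_mul_id (H : ExpDecay K h h') (u : ℝ) :
    symmPV (fun s => s * h s) u = u * symmPV h u + ∫ s, h s := by
  have hi : Integrable (fun t => h (u + t)) := H.integrable.comp_add_left u
  have hi' : Integrable (fun t => h (u - t)) := H.integrable.comp_sub_left u
  have e : ∫ s, h s = ∫ t in Set.Ioi (0 : ℝ), (h (u + t) + h (u - t)) := by
    rw [← integral_add_left_eq_self h u, integral_eq_Ioi_add hi]
    rfl
  have hs : Integrable (fun t => h (u + t) + h (u - t)) := hi.add hi'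
  rw [e, symmPV, symmPV, ← integral_const_mul,
    ← integral_add ((H.integrable_quot u).const_mul u) hs.integrableOn]
  refine setIntegral_congr_fun measurableSet_Ioi fun t ht => ?_
  have : t ≠ 0 := ne_of_gt ht
  field_simp
  ring

lemma pvReal_eq (H : ExpDecay K h h') (u : ℝ) : pvReal h u = symmPV h u := by
  refine Filter.Tendsto.limUnder_eq ?_
  have key : ∀ δ : ℝ, 0 < δ → ∫ s in {s : ℝ | δ ≤ |s - u|}, h s / (s - u) =
      ∫ t in Set.Ioi (0 : ℝ), {t : ℝ | δ ≤ t}.indicator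
        (fun t => (h (u + t) - h (u - t)) / t) t := by
    intro δ hδ
    have hS : MeasurableSet {s : ℝ | δ ≤ |s - u|} :=
      measurableSet_le measurable_const (by fun_prop)
    have hk : Integrable ({s : ℝ | δ ≤ |s - u|}.indicator (fun s => h s / (s - u))) := by
      refine (H.integrable.norm.const_mul δ⁻¹).mono'
        ((H.continuous.measurable.div (by fun_prop)).indicator hS).aestronglyMeasurable ?_
      refine Filter.Eventually.of_forall fun s => ?_
      by_cases hs : s ∈ {s : ℝ | δ ≤ |s - u|}
      · rw [Set.indicator_of_mem hs, norm_div, div_eq_inv_mul]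
        exact mul_le_mul_of_nonneg_right (inv_anti₀ hδ hs) (norm_nonneg _)
      · rw [Set.indicator_of_notMem hs, norm_zero]
        positivity
    rw [← integral_indicator hS, ← integral_add_left_eq_self _ u,
      integral_eq_Ioi_add (hk.comp_add_left u)]
    refine setIntegral_congr_fun measurableSet_Ioi fun t ht => ?_
    have ht' : (0 : ℝ) < t := ht
    by_cases hs : δ ≤ t
    · simp only [Set.indicator, Set.mem_ofPred_eq, add_sub_cancel_left, abs_neg, abs_of_pos ht', hs,
        if_true, div_neg, sub_div]
      rw [← sub_eq_add_neg, ← sub_eq_add_neg]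
    · simp [Set.indicator, abs_of_pos ht', hs]
  refine Filter.Tendsto.congr' (f₁ := fun δ => ∫ t in Set.Ioi (0 : ℝ), {t : ℝ | δ ≤ t}.indicator
        (fun t => (h (u + t) - h (u - t)) / t) t) ?_ ?_
  · filter_upwards [self_mem_nhdsWithin] with δ hδ using (key δ hδ).symm
  · refine tendsto_integral_filter_of_dominated_convergence
      (fun t => ‖(h (u + t) - h (u - t)) / t‖) ?_ ?_ (H.integrable_quot u).norm ?_
    · exact Filter.Eventually.of_forall fun δ => ((measurable_quot H.continuous u).indicator
        (measurableSet_le measurable_const measurable_id)).aestronglyMeasurable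
    · exact Filter.Eventually.of_forall fun δ => Filter.Eventually.of_forall fun t =>
        norm_indicator_le_norm_self _ _
    · filter_upwards [ae_restrict_mem measurableSet_Ioi] with t ht
      refine tendsto_const_nhds.congr' ?_
      filter_upwards [mem_nhdsWithin_of_mem_nhds (Iio_mem_nhds (show (0 : ℝ) < t from ht))]
        with δ hδ
      rw [Set.indicator_of_mem (show t ∈ {t : ℝ | δ ≤ t} from (show δ < t from hδ).le)]

end ExpDecay

/-! ### Moment expansion at infinity -/

lemma pow_mul_exp_le (n : ℕ) (s : ℝ) :
    |s| ^ n * Real.exp (-|s| / 2) ≤ 4 ^ n * n.factorial * Real.exp (-|s| / 4) := by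
  have h2 := Real.pow_div_factorial_le_exp (|s| / 4) (by positivity) n
  have h3 : Real.exp (-|s| / 4) = Real.exp (|s| / 4) * Real.exp (-|s| / 2) := by
    rw [← Real.exp_add]; ring_nf
  have h4 : |s| ^ n ≤ 4 ^ n * n.factorial * Real.exp (|s| / 4) := by
    rw [div_pow, div_div, div_le_iff₀ (by positivity)] at h2
    linarith
  rw [h3, ← mul_assoc]
  exact mul_le_mul_of_nonneg_right h4 (Real.exp_pos _).le

/-- The factor by which multiplication with `s^n` enlarges the decay constant when the rate is
lowered from `1/2` to `1/4`. -/
def powConst (n : ℕ) : ℝ :=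
  n * (4 ^ (n - 1) * (n - 1).factorial) + 4 ^ n * n.factorial

lemma powConst_nonneg (n : ℕ) : 0 ≤ powConst n := by unfold powConst; positivity

lemma expDecay_pow_mul {K : ℝ} {h h' : ℝ → ℝ} (hd : ∀ s, HasDerivAt h (h' s) s)
    (hb : ∀ s, |h s| ≤ K * Real.exp (-|s| / 2)) (hb' : ∀ s, |h' s| ≤ K * Real.exp (-|s| / 2))
    (n : ℕ) : ExpDecay (K * powConst n) (fun s => s ^ n * h s)
      (fun s => n * s ^ (n - 1) * h s + s ^ n * h' s) := by
  have hK : 0 ≤ K := by simpa using (abs_nonneg _).trans (hb 0)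
  have gen : ∀ (k : ℝ → ℝ), (∀ s, |k s| ≤ K * Real.exp (-|s| / 2)) → ∀ (m : ℕ) (s : ℝ),
      |s ^ m * k s| ≤ K * (4 ^ m * m.factorial) * Real.exp (-|s| / 4) := by
    intro k hk m s
    rw [abs_mul, abs_pow]
    calc |s| ^ m * |k s| ≤ |s| ^ m * (K * Real.exp (-|s| / 2)) :=
          mul_le_mul_of_nonneg_left (hk s) (by positivity)
      _ = K * (|s| ^ m * Real.exp (-|s| / 2)) := by ring
      _ ≤ K * (4 ^ m * m.factorial * Real.exp (-|s| / 4)) :=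
          mul_le_mul_of_nonneg_left (pow_mul_exp_le m s) hK
      _ = _ := by ring
  refine ⟨fun s => ?_, fun s => ?_, fun s => ?_⟩
  · exact (hasDerivAt_pow n s).mul (hd s)
  · refine (gen h hb n s).trans ?_
    refine mul_le_mul_of_nonneg_right (mul_le_mul_of_nonneg_left ?_ hK) (Real.exp_pos _).le
    unfold powConst
    have : (0 : ℝ) ≤ n * (4 ^ (n - 1) * (n - 1).factorial) := by positivity
    linarith
  · have h1 := gen h hb (n - 1) s
    have h2 := gen h' hb' n s
    refine (abs_add_le _ _).trans ?_
    rw [mul_assoc, abs_mul, Nat.abs_cast]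
    have h3 := mul_le_mul_of_nonneg_left h1 (Nat.cast_nonneg (α := ℝ) n)
    unfold powConst
    linarith

/-- Iterating `symmPV_mul_id`: the finite moment expansion of the principal value at infinity. -/
lemma pow_mul_symmPV {K : ℝ} {h h' : ℝ → ℝ} (hd : ∀ s, HasDerivAt h (h' s) s)
    (hb : ∀ s, |h s| ≤ K * Real.exp (-|s| / 2)) (hb' : ∀ s, |h' s| ≤ K * Real.exp (-|s| / 2))
    (u : ℝ) (n : ℕ) :
    u ^ n * symmPV h u = symmPV (fun s => s ^ n * h s) u -
      ∑ k ∈ Finset.range n, u ^ (n - 1 - k) * ∫ s, s ^ k * h s := by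
  induction n with
  | zero => simp
  | succ n ih =>
    have h1 := (expDecay_pow_mul hd hb hb' n).symmPV_mul_id u
    have h2 : (fun s : ℝ => s * (s ^ n * h s)) = fun s => s ^ (n + 1) * h s := by
      funext s; ring
    have h3 : ∑ k ∈ Finset.range n, u ^ (n - k) * ∫ s, s ^ k * h s =
        u * ∑ k ∈ Finset.range n, u ^ (n - 1 - k) * ∫ s, s ^ k * h s := by
      rw [Finset.mul_sum]
      refine Finset.sum_congr rfl fun k hk => ?_
      rw [Finset.mem_range] at hk
      rw [show n - k = (n - 1 - k) + 1 by lia, pow_succ]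
      ring
    rw [h2] at h1
    rw [Finset.sum_range_succ, Nat.add_sub_cancel, h3, Nat.sub_self, pow_zero, one_mul, h1, pow_succ']
    linear_combination u * ih

/-- A chain `G 0, …, G 8` of successive derivatives, all dominated by `K e^{-|s|/2}`. -/
structure DerivChain (K : ℝ) (G : ℕ → ℝ → ℝ) : Prop where
  deriv : ∀ m < 8, ∀ s, HasDerivAt (G m) (G (m + 1) s) s
  bound : ∀ m ≤ 8, ∀ s, |G m s| ≤ K * Real.exp (-|s| / 2)

namespace DerivChain

variable {K : ℝ} {G : ℕ → ℝ → ℝ}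

lemma powDecay (H : DerivChain K G) {m : ℕ} (hm : m < 8) (n : ℕ) :
    ExpDecay (K * powConst n) (fun s => s ^ n * G m s)
      (fun s => n * s ^ (n - 1) * G m s + s ^ n * G (m + 1) s) :=
  expDecay_pow_mul (H.deriv m hm) (H.bound m hm.le) (H.bound (m + 1) hm) n

lemma expDecay (H : DerivChain K G) {m : ℕ} (hm : m < 8) : ExpDecay K (G m) (G (m + 1)) := by
  have := H.powDecay hm 0
  simpa [powConst] using this

lemma moment_succ (H : DerivChain K G) {m : ℕ} (hm : m < 7) (k : ℕ) :
    ∫ s, s ^ k * G (m + 1) s = -(k * ∫ s, s ^ (k - 1) * G m s) := by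
  have i1 := (H.powDecay (m := m + 1) (by lia) k).integrable
  have i2 := (H.powDecay (m := m) (by lia) (k - 1)).integrable.const_mul (k : ℝ)
  have i3 := (H.powDecay (m := m) (by lia) k).integrable
  have := integral_mul_deriv_eq_deriv_mul_of_integrable (u := fun s : ℝ => s ^ k)
    (u' := fun s : ℝ => k * s ^ (k - 1)) (v := G m) (v' := G (m + 1))
    (fun x _ => hasDerivAt_pow k x) (fun x _ => H.deriv m (by lia) x) i1
    (by refine i2.congr (Filter.Eventually.of_forall fun s => ?_)
        simp [mul_assoc]) i3
  rw [this, ← integral_const_mul]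
  simp only [mul_assoc]

lemma moment_eq_zero (H : DerivChain K G) : ∀ {m : ℕ}, m ≤ 7 → ∀ k < m, ∫ s, s ^ k * G m s = 0
  | 0, _, k, hk => absurd hk (by lia)
  | m + 1, hm, k, hk => by
    rw [H.moment_succ (by lia)]
    rcases k with _ | k
    · simp
    · rw [Nat.add_sub_cancel, H.moment_eq_zero (by lia) k (by lia)]
      simp

lemma moment_self (H : DerivChain K G) (h0 : ∫ s, G 0 s = 1) :
    ∀ {m : ℕ}, m ≤ 7 → ∫ s, s ^ m * G m s = (-1) ^ m * m.factorial
  | 0, _ => by simpa using h0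
  | m + 1, hm => by
    rw [H.moment_succ (by lia), Nat.add_sub_cancel, H.moment_self h0 (by lia), Nat.factorial_succ]
    push_cast
    ring

/-- The constant in the expansion of order `j`. -/
def asympConst (K : ℝ) (j : ℕ) : ℝ :=
  K * powConst (j + 3) * (2 + 2 * ∫ s : ℝ, Real.exp (-|s| / 4)) +
    K * powConst (j + 2) * ∫ s : ℝ, Real.exp (-|s| / 4)

lemma symmPV_asymp (H : DerivChain K G) (h0 : ∫ s, G 0 s = 1) {j : ℕ} (hj : j ≤ 6) {u : ℝ}
    (hu : 1 ≤ |u|) :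
    |symmPV (G (j + 1)) u - (-1 : ℝ) ^ j * (Nat.factorial (j + 1) : ℝ) / u ^ (j + 2)| ≤
      asympConst K j / |u| ^ (j + 3) := by
  have hu0 : u ≠ 0 := by
    rintro rfl
    norm_num at hu
  have e := pow_mul_symmPV (H.deriv (j + 1) (by lia)) (H.bound (j + 1) (by lia))
    (H.bound (j + 2) (by lia)) u (j + 3)
  rw [Finset.sum_range_succ, Finset.sum_range_succ, H.moment_self h0 (by lia),
    Finset.sum_eq_zero, zero_add, show j + 3 - 1 - (j + 1) = 1 by lia,
    show j + 3 - 1 - (j + 2) = 0 by lia, pow_one, pow_zero, one_mul] at e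
  swap
  · intro k hk
    rw [H.moment_eq_zero (by lia) k (Finset.mem_range.1 hk), mul_zero]
  have b1 := (H.powDecay (m := j + 1) (by lia) (j + 3)).abs_symmPV_le u
  have b2 : |∫ s, s ^ (j + 2) * G (j + 1) s| ≤
      K * powConst (j + 2) * ∫ s : ℝ, Real.exp (-|s| / 4) := by
    rw [← integral_const_mul]
    rw [← Real.norm_eq_abs]
    exact norm_integral_le_of_norm_le (integrable_exp_abs.const_mul _)
      (Filter.Eventually.of_forall (H.powDecay (m := j + 1) (by lia) (j + 2)).bound)
  have hp : 0 < |u| ^ (j + 3) := by positivity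
  rw [le_div_iff₀ hp, ← abs_pow, ← abs_mul]
  have e2 : (symmPV (G (j + 1)) u - (-1 : ℝ) ^ j * (Nat.factorial (j + 1) : ℝ) / u ^ (j + 2)) *
      u ^ (j + 3) = symmPV (fun s => s ^ (j + 3) * G (j + 1) s) u -
        ∫ s, s ^ (j + 2) * G (j + 1) s := by
    have : (-1 : ℝ) ^ j * (Nat.factorial (j + 1) : ℝ) / u ^ (j + 2) * u ^ (j + 3) =
        (-1 : ℝ) ^ j * (Nat.factorial (j + 1) : ℝ) * u := by
      rw [pow_succ u (j + 2)]
      field_simp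
    rw [sub_mul, this]
    linear_combination e
  rw [e2]
  exact (abs_sub _ _).trans (add_le_add b1 b2)

lemma iterate_deriv_symmPV (H : DerivChain K G) :
    ∀ {j : ℕ}, j ≤ 6 → _root_.deriv^[j] (symmPV (G 1)) = symmPV (G (j + 1))
  | 0, _ => rfl
  | j + 1, hj => by
    rw [Function.iterate_succ_apply', H.iterate_deriv_symmPV (by lia)]
    funext u
    exact ((H.expDecay (by lia)).hasDerivAt_symmPV (H.expDecay (by lia)) u).deriv

end DerivChain

/-! ### The Radon transform -/

/-- The integral over `uχ + χ^⊥` of the `m`-th directional derivative of `f` along `χ`. -/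
def radonDeriv (f : E3 → ℝ) (χ : E3) (m : ℕ) (u : ℝ) : ℝ :=
  ∫ w : ((ℝ ∙ χ)ᗮ : Submodule ℝ E3), iteratedFDeriv ℝ m f (u • χ + (w : E3)) (fun _ => χ)

lemma radonDeriv_zero (f : E3 → ℝ) (χ : E3) : radonDeriv f χ 0 = Radon f χ := by
  funext u
  simp [radonDeriv, Radon]

lemma finrank_perp {χ : E3} (hχ : ‖χ‖ = 1) : Module.finrank ℝ ((ℝ ∙ χ)ᗮ : Submodule ℝ E3) = 2 := by
  have : Fact (Module.finrank ℝ E3 = 2 + 1) := ⟨by simp⟩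
  exact Submodule.finrank_orthogonal_span_singleton (by rintro rfl; simp at hχ)

/-- By rotation invariance this integral over `χ^⊥` does not depend on `χ`. -/
lemma integral_perp_exp {χ : E3} (hχ : ‖χ‖ = 1) :
    ∫ w : ((ℝ ∙ χ)ᗮ : Submodule ℝ E3), Real.exp (-‖w‖ / 2) =
      ∫ w : EuclideanSpace ℝ (Fin 2), Real.exp (-‖w‖ / 2) := by
  let b := (stdOrthonormalBasis ℝ ((ℝ ∙ χ)ᗮ : Submodule ℝ E3)).reindex
    (finCongr (finrank_perp hχ))
  rw [← b.measurePreserving_measurableEquiv.integral_comp' (fun w => Real.exp (-‖w‖ / 2))]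
  refine integral_congr_ae (Filter.Eventually.of_forall fun w => ?_)
  have : ‖b.measurableEquiv w‖ = ‖w‖ := b.repr.norm_map w
  simp [this]

lemma integrable_perp_exp {χ : E3} (hχ : ‖χ‖ = 1) :
    Integrable (fun w : ((ℝ ∙ χ)ᗮ : Submodule ℝ E3) => Real.exp (-‖w‖ / 2)) := by
  refine (integrable_exp_neg_norm_div volume (by rw [finrank_perp hχ]; norm_num)).mono'
    (by fun_prop) (Filter.Eventually.of_forall fun w => ?_)
  rw [Real.norm_of_nonneg (Real.exp_pos _).le, Real.exp_le_exp]
  have := norm_nonneg w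
  linarith

lemma exp_neg_norm_le {χ : E3} (hχ : ‖χ‖ = 1) (u : ℝ) (w : ((ℝ ∙ χ)ᗮ : Submodule ℝ E3)) :
    Real.exp (-‖u • χ + (w : E3)‖) ≤ Real.exp (-|u| / 2) * Real.exp (-‖w‖ / 2) := by
  rw [← Real.exp_add, Real.exp_le_exp]
  have h0 : ⟪u • χ, (w : E3)⟫ = 0 := by
    rw [real_inner_smul_left, Submodule.mem_orthogonal_singleton_iff_inner_right.1 w.2, mul_zero]
  have h1 := norm_add_sq_eq_norm_sq_add_norm_sq_of_inner_eq_zero _ _ h0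
  have h2 : ‖u • χ‖ = |u| := by rw [norm_smul, hχ, mul_one, Real.norm_eq_abs]
  rw [h2] at h1
  have h3 : ‖(w : E3)‖ = ‖w‖ := rfl
  rw [h3] at h1
  have a1 : |u| ≤ ‖u • χ + (w : E3)‖ :=
    abs_le_of_sq_le_sq' (by nlinarith [norm_nonneg w]) (norm_nonneg _) |>.2
  have a2 : ‖w‖ ≤ ‖u • χ + (w : E3)‖ :=
    abs_le_of_sq_le_sq' (by nlinarith [abs_nonneg u]) (norm_nonneg _) |>.2
  linarith

lemma radon_integrand_le {f : E3 → ℝ} {C₀ : ℝ}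
    (hdecay : ∀ m : ℕ, m ≤ 8 → ∀ v : E3, ‖iteratedFDeriv ℝ m f v‖ ≤ C₀ * Real.exp (-‖v‖))
    {χ : E3} (hχ : ‖χ‖ = 1) {m : ℕ} (hm : m ≤ 8) (u : ℝ)
    (w : ((ℝ ∙ χ)ᗮ : Submodule ℝ E3)) :
    ‖iteratedFDeriv ℝ m f (u • χ + (w : E3)) (fun _ => χ)‖ ≤
      C₀ * Real.exp (-|u| / 2) * Real.exp (-‖w‖ / 2) := by
  have hC : 0 ≤ C₀ := by simpa using (norm_nonneg _).trans (hdecay 0 (by lia) 0)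
  refine (ContinuousMultilinearMap.le_opNorm _ _).trans ?_
  simp only [hχ, Finset.prod_const_one, mul_one]
  refine (hdecay m hm _).trans ?_
  rw [mul_assoc]
  exact mul_le_mul_of_nonneg_left (exp_neg_norm_le hχ u w) hC

lemma hasDerivAt_radonDeriv {f : E3 → ℝ} {C₀ : ℝ} (hreg : ContDiff ℝ 8 f)
    (hdecay : ∀ m : ℕ, m ≤ 8 → ∀ v : E3, ‖iteratedFDeriv ℝ m f v‖ ≤ C₀ * Real.exp (-‖v‖))
    {χ : E3} (hχ : ‖χ‖ = 1) {m : ℕ} (hm : m < 8) (u : ℝ) :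
    HasDerivAt (radonDeriv f χ m) (radonDeriv f χ (m + 1) u) u := by
  have hC : 0 ≤ C₀ := by simpa using (norm_nonneg _).trans (hdecay 0 (by lia) 0)
  have hcont : ∀ k ≤ 8, ∀ x : ℝ, Continuous fun w : ((ℝ ∙ χ)ᗮ : Submodule ℝ E3) =>
      iteratedFDeriv ℝ k f (x • χ + (w : E3)) (fun _ => χ) := by
    intro k hk x
    have h1 : Continuous (iteratedFDeriv ℝ k f) :=
      hreg.continuous_iteratedFDeriv (by exact_mod_cast hk)
    have h2 : Continuous fun w : ((ℝ ∙ χ)ᗮ : Submodule ℝ E3) =>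
      iteratedFDeriv ℝ k f (x • χ + (w : E3)) := h1.comp (by fun_prop)
    exact (ContinuousMultilinearMap.apply ℝ (fun _ : Fin k => E3) ℝ (fun _ => χ)).continuous.comp h2
  have hle : ∀ k ≤ 8, ∀ (x : ℝ) (w : ((ℝ ∙ χ)ᗮ : Submodule ℝ E3)),
      ‖iteratedFDeriv ℝ k f (x • χ + (w : E3)) (fun _ => χ)‖ ≤ C₀ * Real.exp (-‖w‖ / 2) := by
    intro k hk x w
    refine (radon_integrand_le hdecay hχ hk x w).trans ?_
    refine mul_le_mul_of_nonneg_right (mul_le_of_le_one_right hC ?_) (Real.exp_pos _).le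
    refine Real.exp_le_one_iff.2 ?_
    have := abs_nonneg x
    linarith
  have hint := (integrable_perp_exp hχ).const_mul C₀
  refine (hasDerivAt_integral_of_dominated_loc_of_deriv_le
    (F := fun u (w : ((ℝ ∙ χ)ᗮ : Submodule ℝ E3)) =>
      iteratedFDeriv ℝ m f (u • χ + (w : E3)) (fun _ => χ))
    (F' := fun u (w : ((ℝ ∙ χ)ᗮ : Submodule ℝ E3)) =>
      iteratedFDeriv ℝ (m + 1) f (u • χ + (w : E3)) (fun _ => χ))
    Filter.univ_mem
    (Filter.Eventually.of_forall fun x => (hcont m hm.le x).aestronglyMeasurable)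
    (hint.mono' (hcont m hm.le u).aestronglyMeasurable
      (Filter.Eventually.of_forall (hle m hm.le u)))
    (hcont (m + 1) hm u).aestronglyMeasurable
    (Filter.Eventually.of_forall fun w x _ => hle (m + 1) hm x w) hint
    (Filter.Eventually.of_forall fun w x _ => ?_)).2
  have h1 : HasFDerivAt (iteratedFDeriv ℝ m f)
      (fderiv ℝ (iteratedFDeriv ℝ m f) (x • χ + (w : E3))) (x • χ + (w : E3)) :=
    (hreg.differentiable_iteratedFDeriv (by exact_mod_cast hm) _).hasFDerivAt
  have h2 : HasDerivAt (fun x : ℝ => x • χ + (w : E3)) χ x := by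
    simpa using ((hasDerivAt_id x).smul_const χ).add_const (w : E3)
  have h3 := h1.comp_hasDerivAt x h2
  exact ((ContinuousMultilinearMap.apply ℝ (fun _ : Fin m => E3) ℝ
    (fun _ => χ)).hasFDerivAt).comp_hasDerivAt x h3

/-- Fubini along the orthogonal decomposition `ℝ³ = ℝχ ⊕ χ^⊥`. -/
lemma integral_radon {f : E3 → ℝ} (hf : Integrable f) {χ : E3} (hχ : ‖χ‖ = 1) :
    ∫ u, Radon f χ u = ∫ v, f v := by
  let P := ((ℝ ∙ χ)ᗮ : Submodule ℝ E3)
  let e1 : ℝ ≃ₗᵢ[ℝ] (ℝ ∙ χ) := LinearIsometryEquiv.toSpanUnitSingleton χ hχ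
  have m1 : MeasurePreserving (e1.toMeasurableEquiv.prodCongr (MeasurableEquiv.refl P))
      (volume : Measure (ℝ × P)) volume :=
    e1.measurePreserving.prod (MeasurePreserving.id _)
  have m2 : MeasurePreserving (MeasurableEquiv.toLp 2 ((ℝ ∙ χ) × P)) :=
    WithLp.volume_preserving_toLp _ _
  have m3 : MeasurePreserving (ℝ ∙ χ).orthogonalDecomposition.symm.toMeasurableEquiv :=
    LinearIsometryEquiv.measurePreserving _
  let T := ((e1.toMeasurableEquiv.prodCongr (MeasurableEquiv.refl P)).trans
    (MeasurableEquiv.toLp 2 ((ℝ ∙ χ) × P))).trans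
      (ℝ ∙ χ).orthogonalDecomposition.symm.toMeasurableEquiv
  have mT : MeasurePreserving T (volume : Measure (ℝ × P)) volume := (m1.trans m2).trans m3
  have hT : ∀ p : ℝ × P, T p = p.1 • χ + (p.2 : E3) := by
    intro p
    change (ℝ ∙ χ).orthogonalDecomposition.symm (WithLp.toLp 2 (e1 p.1, p.2)) = _
    simp [e1]
  have hi : Integrable (fun p : ℝ × P => f (p.1 • χ + (p.2 : E3))) := by
    have := mT.integrable_comp_of_integrable hf
    refine this.congr (Filter.Eventually.of_forall fun p => ?_)
    simp [hT]
  rw [← mT.integral_comp' f]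
  simp only [hT]
  exact (integral_prod _ hi).symm

lemma derivChain_radon {f : E3 → ℝ} {C₀ : ℝ} (hreg : ContDiff ℝ 8 f)
    (hdecay : ∀ m : ℕ, m ≤ 8 → ∀ v : E3, ‖iteratedFDeriv ℝ m f v‖ ≤ C₀ * Real.exp (-‖v‖))
    {χ : E3} (hχ : ‖χ‖ = 1) :
    DerivChain (C₀ * ∫ w : EuclideanSpace ℝ (Fin 2), Real.exp (-‖w‖ / 2)) (radonDeriv f χ) := by
  refine ⟨fun m hm s => hasDerivAt_radonDeriv hreg hdecay hχ hm s, fun m hm s => ?_⟩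
  have h1 := norm_integral_le_of_norm_le
    ((integrable_perp_exp hχ).const_mul (C₀ * Real.exp (-|s| / 2)))
    (Filter.Eventually.of_forall (radon_integrand_le hdecay hχ hm s))
  rw [integral_const_mul, integral_perp_exp hχ] at h1
  rw [← Real.norm_eq_abs]
  exact h1.trans_eq (by ring)

lemma alphaFun_eq {f : E3 → ℝ} {χ : E3} {K : ℝ} (H : DerivChain K (radonDeriv f χ)) :
    alphaFun f χ = symmPV (radonDeriv f χ 1) := by
  have h1 : (fun s => deriv (Radon f χ) s) = radonDeriv f χ 1 := by
    funext s
    rw [← radonDeriv_zero]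
    exact (H.deriv 0 (by norm_num) s).deriv
  funext u
  rw [alphaFun, h1]
  exact (H.expDecay (by norm_num)).pvReal_eq u

lemma integrable_of_decay {f : E3 → ℝ} {C₀ : ℝ} (hreg : ContDiff ℝ 8 f)
    (hdecay : ∀ m : ℕ, m ≤ 8 → ∀ v : E3, ‖iteratedFDeriv ℝ m f v‖ ≤ C₀ * Real.exp (-‖v‖)) :
    Integrable f := by
  have hC : 0 ≤ C₀ := by simpa using (norm_nonneg _).trans (hdecay 0 (by lia) 0)
  refine ((integrable_exp_neg_norm_div (volume : Measure E3) (by simp)).const_mul C₀).mono'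
    hreg.continuous.aestronglyMeasurable (Filter.Eventually.of_forall fun v => ?_)
  have h1 := hdecay 0 (by lia) v
  rw [norm_iteratedFDeriv_zero] at h1
  refine h1.trans (mul_le_mul_of_nonneg_left (Real.exp_le_exp.2 ?_) hC)
  have := norm_nonneg v
  linarith

/-- asymptotics of `α(χ,u)` for large `|u|`.  Let `f` satisfy the
regularity and decay assumption.  Then there are `C, R > 0` such that for every unit vector
`χ`, every `|u| ≥ R` and every `0 ≤ j ≤ 6`,
`|∂_u^j α(χ,u) − (−1)^j (j+1)!/u^{j+2}| ≤ C/|u|^{j+3}`. -/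
theorem statement10 (f : EuclideanSpace ℝ (Fin 3) → ℝ) (C₀ : ℝ)
    (hpos : ∀ v : E3, 0 ≤ f v) (hreg : ContDiff ℝ 8 f)
    (hdecay : ∀ m : ℕ, m ≤ 8 → ∀ v : E3,
      ‖iteratedFDeriv ℝ m f v‖ ≤ C₀ * Real.exp (-‖v‖))
    (hnorm : ∫ v : E3, f v = 1) :
    ∃ C R : ℝ, 0 < C ∧ 0 < R ∧
      ∀ χ : E3, ‖χ‖ = 1 → ∀ u : ℝ, R ≤ |u| → ∀ j : ℕ, j ≤ 6 →
        |deriv^[j] (alphaFun f χ) u -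
            (-1 : ℝ) ^ j * (Nat.factorial (j + 1) : ℝ) / u ^ (j + 2)| ≤
          C / |u| ^ (j + 3) := by
  set K := C₀ * ∫ w : EuclideanSpace ℝ (Fin 2), Real.exp (-‖w‖ / 2)
  refine ⟨∑ j ∈ Finset.range 7, |DerivChain.asympConst K j| + 1, 1, by positivity, one_pos, ?_⟩
  intro χ hχ u hu j hj
  have H := derivChain_radon hreg hdecay hχ
  have h0 : ∫ s, radonDeriv f χ 0 s = 1 := by
    rw [radonDeriv_zero, integral_radon (integrable_of_decay hreg hdecay) hχ, hnorm]
  rw [alphaFun_eq H, H.iterate_deriv_symmPV hj]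
  refine (H.symmPV_asymp h0 hj hu).trans (div_le_div_of_nonneg_right ?_ (by positivity))
  have h1 := Finset.single_le_sum (f := fun j => |DerivChain.asympConst K j|)
    (fun i _ => abs_nonneg _) (Finset.mem_range.2 (by lia : j < 7))
  have h2 := le_abs_self (DerivChain.asympConst K j)
  linarith
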